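/- For w, y ∈ W_ext the following two conditions are equivalent: (1) there exists μ ∈ Y such that t_μ w and t_μ y belong to W_ext⁺ and t_μ w ≤ t_μ y; (2) for every μ ∈ Y such that t_μ w and t_μ y belong to W_ext⁺, one has t_μ w ≤ t_μ y. -/

import Mathlib

open scoped Classical TensorProduct

noncomputable section

namespace SemiInf

/-- The data of a root datum together with its (finite) Weyl group:
finite-rank free `ℤ`-modules `X` and `Y` with a pairing, a finite group `W`
acting on both, a finite set of roots with a subset of positive roots, and a
coroot map. The axioms are collected in `Ctx.IsRootDatum`. -/
structure Ctx where
  X : Type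
  Y : Type
  [addX : AddCommGroup X]
  [addY : AddCommGroup Y]
  W : Type
  [grpW : Group W]
  [finW : Fintype W]
  [actX : DistribMulAction W X]
  [actY : DistribMulAction W Y]
  pair : Y →+ X →+ ℤ
  roots : Finset X
  pos : Finset X
  coroot : X → Y

attribute [instance] Ctx.addX Ctx.addY Ctx.grpW Ctx.finW Ctx.actX Ctx.actY

namespace Ctx

variable (C : Ctx)

/-- The axioms of a root datum (free finite-rank lattices, perfect pairing,
finite reduced crystallographic root system with a system of positive roots),
with `W` its Weyl group acting faithfully on `X` and `Y`. -/
structure IsRootDatum : Prop where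
  free_X : Module.Free ℤ C.X
  finite_X : Module.Finite ℤ C.X
  free_Y : Module.Free ℤ C.Y
  finite_Y : Module.Finite ℤ C.Y
  perfect_left : Function.Bijective fun y : C.Y => C.pair y
  perfect_right : Function.Bijective fun x : C.X => C.pair.flip x
  pos_subset : C.pos ⊆ C.roots
  root_decomp : ∀ α ∈ C.roots, α ∈ C.pos ∨ -α ∈ C.pos
  pos_neg_disjoint : ∀ α ∈ C.pos, -α ∉ C.pos
  zero_not_root : (0 : C.X) ∉ C.roots
  reduced : ∀ α ∈ C.roots, ∀ n : ℤ, n • α ∈ C.roots → n = 1 ∨ n = -1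
  coroot_self : ∀ α ∈ C.roots, C.pair (C.coroot α) α = 2
  isReflection : ∀ α ∈ C.roots, ∃ s : C.W,
    (∀ x : C.X, s • x = x - C.pair (C.coroot α) x • α) ∧
    (∀ y : C.Y, s • y = y - C.pair y α • C.coroot α)
  weyl_gen : ∀ w : C.W, w ∈ Subgroup.closure {s : C.W | ∃ α ∈ C.roots,
    (∀ x : C.X, s • x = x - C.pair (C.coroot α) x • α) ∧
    (∀ y : C.Y, s • y = y - C.pair y α • C.coroot α)}
  faithful_X : ∀ w : C.W, (∀ x : C.X, w • x = x) → w = 1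
  faithful_Y : ∀ w : C.W, (∀ y : C.Y, w • y = y) → w = 1
  pair_inv : ∀ (w : C.W) (y : C.Y) (x : C.X), C.pair (w • y) (w • x) = C.pair y x
  roots_stable : ∀ (w : C.W), ∀ α ∈ C.roots, w • α ∈ C.roots
  smul_coroot : ∀ (w : C.W), ∀ α ∈ C.roots, w • C.coroot α = C.coroot (w • α)
  exists_regular_X : ∃ ξ : C.X, ∀ α ∈ C.pos, 0 < C.pair (C.coroot α) ξ
  exists_regular_Y : ∃ η : C.Y, ∀ α ∈ C.pos, 0 < C.pair η α

/-- The length function of the finite Weyl group: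
`ℓ(w) = #{α ∈ 𝔯₊ : w(α) ∈ −𝔯₊}`. -/
def lenW (w : C.W) : ℕ := (C.pos.filter fun α => -(w • α) ∈ C.pos).card

/-- `w` is the longest element of the finite Weyl group iff it maps every
positive root to a negative root. -/
def IsLongest (w : C.W) : Prop := ∀ α ∈ C.pos, -(w • α) ∈ C.pos

/-- The set `Y₊` of dominant cocharacters. -/
def Ypos : Set C.Y := {l | ∀ α ∈ C.pos, 0 ≤ C.pair l α}

/-- The set `Y₊₊` of strictly dominant cocharacters. -/
def Yppos : Set C.Y := {l | ∀ α ∈ C.pos, 0 < C.pair l α}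

/-- The action of `W` on `Multiplicative Y`, as a homomorphism to `MulAut`. -/
def φext : C.W →* MulAut (Multiplicative C.Y) where
  toFun w :=
    { toFun := fun y => Multiplicative.ofAdd (w • Multiplicative.toAdd y)
      invFun := fun y => Multiplicative.ofAdd (w⁻¹ • Multiplicative.toAdd y)
      left_inv := fun y => by simp
      right_inv := fun y => by simp
      map_mul' := fun a b => by simp [smul_add] }
  map_one' := by
    apply MulEquiv.ext
    intro y
    simp
  map_mul' w₁ w₂ := by
    apply MulEquiv.ext
    intro y
    simp [mul_smul]

/-- The extended affine Weyl group `W_ext = W_f ⋉ Y`. -/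
abbrev Wext : Type := Multiplicative C.Y ⋊[C.φext] C.W

/-- The translation element `t_λ ∈ W_ext` associated with `λ ∈ Y`. -/
def t (l : C.Y) : C.Wext := SemidirectProduct.inl (Multiplicative.ofAdd l)

/-- The canonical embedding of the finite Weyl group in `W_ext`. -/
def σ (w : C.W) : C.Wext := SemidirectProduct.inr w

/-- The length function on `W_ext`, defined by
`ℓ(w t_λ) = Σ_{α ∈ 𝔯₊, w(α) ∈ 𝔯₊} |⟨λ,α⟩| + Σ_{α ∈ 𝔯₊, w(α) ∈ −𝔯₊} |1 − ⟨λ,α⟩|`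
(an element `g` of the semidirect product equals `w t_λ` for `w = g.right`
and `λ = w⁻¹ • g.left`). -/
def len (g : C.Wext) : ℕ :=
  ∑ α ∈ C.pos,
    if g.right • α ∈ C.pos
      then (C.pair (g.right⁻¹ • Multiplicative.toAdd g.left) α).natAbs
      else ((1 : ℤ) - C.pair (g.right⁻¹ • Multiplicative.toAdd g.left) α).natAbs

/-- The coroot lattice `ℤ𝔯∨ ⊆ Y`. -/
def corootLattice : AddSubgroup C.Y := AddSubgroup.closure (C.coroot '' ↑C.roots)

/-- The affine Weyl group `W_aff = W_f ⋉ ℤ𝔯∨`, as a subgroup of `W_ext`. -/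
def Waff : Subgroup C.Wext :=
  Subgroup.closure ((fun l => C.t l) '' ↑C.corootLattice ∪ Set.range C.σ)

/-- The set of elements of length `1` of `W_aff` (the simple affine
reflections). -/
def Saff : Set C.Wext := {g | g ∈ C.Waff ∧ C.len g = 1}

/-- The set `Ω` of elements of length `0` of `W_ext`. -/
def OmegaSet : Set C.Wext := {g | C.len g = 0}

/-- The Bruhat order on `W_aff`: `u ≤ v` iff some reduced expression of `v`
(as a word in `S_aff`) admits a subword which is an expression of `u`. -/
def bruhatAff (u v : C.Wext) : Prop :=
  ∃ l : List C.Wext, (∀ s ∈ l, s ∈ C.Saff) ∧ l.prod = v ∧ l.length = C.len v ∧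
    ∃ l' : List C.Wext, l'.Sublist l ∧ l'.prod = u

/-- The Bruhat order on `W_ext`, extending the Bruhat order of `W_aff` by
`ω u ≤ ω' v` iff `ω = ω'` and `u ≤ v`, for `ω, ω' ∈ Ω` and `u, v ∈ W_aff`. -/
def bruhat (x y : C.Wext) : Prop :=
  ∃ ω u v : C.Wext, ω ∈ C.OmegaSet ∧ u ∈ C.Waff ∧ v ∈ C.Waff ∧
    x = ω * u ∧ y = ω * v ∧ C.bruhatAff u v

/-- The set `W_ext⁺` of `w ∈ W_ext` such that `ℓ(t_μ w) = ℓ(t_μ) + ℓ(w)` for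
every dominant `μ`. -/
def WextPlus : Set C.Wext :=
  {w | ∀ μ ∈ C.Ypos, C.len (C.t μ * w) = C.len (C.t μ) + C.len w}

/-- The semiinfinite order on `W_ext`. -/
def siLE (w y : C.Wext) : Prop :=
  ∃ μ : C.Y, C.t μ * w ∈ C.WextPlus ∧ C.t μ * y ∈ C.WextPlus ∧
    C.bruhat (C.t μ * w) (C.t μ * y)

/-- The rational vector space `ℚ ⊗ Y`. -/
abbrev QY : Type := ℚ ⊗[ℤ] C.Y

/-- The canonical map `Y → ℚ ⊗ Y`. -/
def ι : C.Y →ₗ[ℤ] C.QY := TensorProduct.mk ℤ ℚ C.Y 1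

/-- The finite set of positive coroots. -/
def posCoroots : Finset C.Y := C.pos.image C.coroot

/-- Half the sum of the positive coroots, as an element of `ℚ ⊗ Y`. -/
def rhoCheck : C.QY := (2⁻¹ : ℚ) ⊗ₜ[ℤ] (∑ β ∈ C.posCoroots, β)

/-- The set of Kostant partitions of `v ∈ ℚ ⊗ Y`: functions
`φ : 𝔯∨₊ → ℤ≥0` with `Σ_α φ(α)·α = v`. -/
def KostantSet (v : C.QY) : Set (↥C.posCoroots → ℕ) :=
  {φ | ∑ β : ↥C.posCoroots, (φ β) • C.ι (β : C.Y) = v}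

/-- Kostant's partition function. -/
def KostantP (v : C.QY) : ℕ := (C.KostantSet v).ncard

/-- The action of `w ∈ W` on `ℚ ⊗ Y`. -/
def actQ (w : C.W) : C.QY →ₗ[ℤ] C.QY :=
  LinearMap.lTensor ℚ ((DistribMulAction.toAddMonoidHom C.Y w).toIntLinearMap)

/-- The simple roots: positive roots which are not sums of two positive
roots. -/
def simpleRoots : Finset C.X :=
  C.pos.filter fun α => ¬ ∃ β ∈ C.pos, ∃ γ ∈ C.pos, α = β + γ

end Ctx

end SemiInf

namespace SemiInf
namespace Ctx

/-- Affine functions `(α, n) : v ↦ ⟨v, α⟩ + n` with the action of `W_ext`. -/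
def act (C : Ctx) (g : C.Wext) : C.X × ℤ →+ C.X × ℤ where
  toFun a := (g.right • a.1, a.2 - C.pair (Multiplicative.toAdd g.left) (g.right • a.1))
  map_zero' := by simp
  map_add' a b := by
    ext
    · simp
    · simp; ring

/-- The reflection in `W` attached to a root. -/
def sW (C : Ctx) (α : C.X) : C.W :=
  if h : ∃ s : C.W,
    (∀ x : C.X, s • x = x - C.pair (C.coroot α) x • α) ∧
    (∀ y : C.Y, s • y = y - C.pair y α • C.coroot α) then h.choose else 1

/-- The affine reflection attached to an affine root. -/
def refl (C : Ctx) (a : C.X × ℤ) : C.Wext := C.t (-(a.2 • C.coroot a.1)) * C.σ (C.sW a.1)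

/-- Indicator of positivity. -/
def e (C : Ctx) (α : C.X) : ℤ := if α ∈ C.pos then 1 else 0

/-- Positive affine roots. -/
def P (C : Ctx) (a : C.X × ℤ) : Prop := a.1 ∈ C.roots ∧ C.e a.1 ≤ a.2

/-- Simple affine roots. -/
def Simple (C : Ctx) (b : C.X × ℤ) : Prop :=
  C.P b ∧ ∀ c, C.P c → C.P (C.act (C.refl b) c) ∨ c = b

variable {C : Ctx}

theorem act_apply (g : C.Wext) (a : C.X × ℤ) :
    C.act g a = (g.right • a.1, a.2 - C.pair (Multiplicative.toAdd g.left) (g.right • a.1)) := rfl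

theorem φext_apply (w : C.W) (y : Multiplicative C.Y) :
    C.φext w y = Multiplicative.ofAdd (w • Multiplicative.toAdd y) := rfl

theorem act_one (a : C.X × ℤ) : C.act 1 a = a := by
  simp [act_apply]

theorem act_mul (h : C.IsRootDatum) (g k : C.Wext) (a : C.X × ℤ) :
    C.act (g * k) a = C.act g (C.act k a) := by
  simp only [act_apply, SemidirectProduct.mul_right, SemidirectProduct.mul_left, toAdd_mul,
    φext_apply, toAdd_ofAdd, mul_smul, map_add, AddMonoidHom.add_apply, h.pair_inv]
  ext
  · rfl
  · simp; ring

theorem act_inv_act (h : C.IsRootDatum) (g : C.Wext) (a : C.X × ℤ) :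
    C.act g⁻¹ (C.act g a) = a := by
  rw [← act_mul h, inv_mul_cancel, act_one]

theorem act_act_inv (h : C.IsRootDatum) (g : C.Wext) (a : C.X × ℤ) :
    C.act g (C.act g⁻¹ a) = a := by
  rw [← act_mul h, mul_inv_cancel, act_one]

theorem act_faithful (h : C.IsRootDatum) (g k : C.Wext)
    (H : ∀ a, C.act g a = C.act k a) : g = k := by
  have h1 : g.right = k.right := by
    have : k.right⁻¹ * g.right = 1 := by
      apply h.faithful_X
      intro x
      have := congrArg Prod.fst (H (x, 0))
      simp only [act_apply] at this
      rw [mul_smul, this, inv_smul_smul]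
    rw [inv_mul_eq_one] at this
    exact this.symm
  have h2 : C.pair (Multiplicative.toAdd g.left) = C.pair (Multiplicative.toAdd k.left) := by
    ext x
    have := congrArg Prod.snd (H (g.right⁻¹ • x, 0))
    simp only [act_apply] at this
    rw [← h1, smul_inv_smul] at this
    linarith
  have h3 := h.perfect_left.1 h2
  apply SemidirectProduct.ext
  · exact Multiplicative.toAdd.injective h3
  · exact h1

theorem sW_spec (h : C.IsRootDatum) {α : C.X} (hα : α ∈ C.roots) :
    (∀ x : C.X, C.sW α • x = x - C.pair (C.coroot α) x • α) ∧
    (∀ y : C.Y, C.sW α • y = y - C.pair y α • C.coroot α) := by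
  have := h.isReflection α hα
  unfold sW
  rw [dif_pos this]
  exact this.choose_spec

theorem refl_act (h : C.IsRootDatum) {a : C.X × ℤ} (ha : a.1 ∈ C.roots) (c : C.X × ℤ) :
    C.act (C.refl a) c = c - C.pair (C.coroot a.1) c.1 • a := by
  have h2 := h.coroot_self _ ha
  unfold refl
  rw [act_mul h]
  simp only [act_apply, t, σ, SemidirectProduct.right_inr, SemidirectProduct.left_inr,
    SemidirectProduct.right_inl, SemidirectProduct.left_inl, one_smul, toAdd_ofAdd, toAdd_one,
    (sW_spec h ha).1]
  ext
  · simp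
  · simp [h2]; ring

theorem act_root (h : C.IsRootDatum) (g : C.Wext) {a : C.X × ℤ} (ha : a.1 ∈ C.roots) :
    (C.act g a).1 ∈ C.roots := h.roots_stable _ _ ha

theorem neg_root (h : C.IsRootDatum) {α : C.X} (hα : α ∈ C.roots) : -α ∈ C.roots := by
  have h1 := (sW_spec h hα).1 α
  rw [h.coroot_self _ hα, two_smul] at h1
  have h2 := h.roots_stable (C.sW α) α hα
  rw [h1] at h2
  simpa using h2

theorem coroot_neg (h : C.IsRootDatum) {α : C.X} (hα : α ∈ C.roots) :
    C.coroot (-α) = -C.coroot α := by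
  have h1 := (sW_spec h hα).1 α
  have h2 := (sW_spec h hα).2 (C.coroot α)
  have h3 := h.smul_coroot (C.sW α) α hα
  rw [h.coroot_self _ hα, two_smul] at h1 h2
  rw [h1, h2] at h3
  simpa using h3.symm

theorem refl_refl (h : C.IsRootDatum) {a : C.X × ℤ} (ha : a.1 ∈ C.roots) :
    C.refl a * C.refl a = 1 := by
  apply act_faithful h
  intro c
  rw [act_mul h, act_one, refl_act h ha, refl_act h ha]
  have : C.pair (C.coroot a.1) (c - C.pair (C.coroot a.1) c.1 • a).1
    = - C.pair (C.coroot a.1) c.1 := by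
    simp [h.coroot_self _ ha]; ring
  rw [this]
  simp

theorem refl_inv (h : C.IsRootDatum) {a : C.X × ℤ} (ha : a.1 ∈ C.roots) :
    (C.refl a)⁻¹ = C.refl a := inv_eq_of_mul_eq_one_left (refl_refl h ha)

theorem refl_self (h : C.IsRootDatum) {a : C.X × ℤ} (ha : a.1 ∈ C.roots) :
    C.act (C.refl a) a = -a := by
  rw [refl_act h ha, h.coroot_self _ ha, two_smul]
  abel

theorem refl_neg (h : C.IsRootDatum) {a : C.X × ℤ} (ha : a.1 ∈ C.roots) :
    C.refl (-a) = C.refl a := by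
  apply act_faithful h
  intro c
  have hn : (-a).1 ∈ C.roots := neg_root h ha
  rw [refl_act h ha, refl_act h hn]
  have : C.coroot (-a).1 = - C.coroot a.1 := coroot_neg h ha
  rw [this]
  simp

theorem mul_refl (h : C.IsRootDatum) (g : C.Wext) {a : C.X × ℤ} (ha : a.1 ∈ C.roots) :
    C.refl (C.act g a) * g = g * C.refl a := by
  apply act_faithful h
  intro c
  rw [act_mul h, act_mul h, refl_act h ha, refl_act h (act_root h g ha), map_sub, map_zsmul]
  have : C.pair (C.coroot (C.act g a).1) (C.act g c).1 = C.pair (C.coroot a.1) c.1 := by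
    simp only [act_apply]
    rw [← h.smul_coroot _ _ ha, h.pair_inv]
  rw [this]

theorem e_neg (h : C.IsRootDatum) {α : C.X} (hα : α ∈ C.roots) : C.e (-α) = 1 - C.e α := by
  unfold e
  by_cases h1 : α ∈ C.pos
  · simp [h1, h.pos_neg_disjoint α h1]
  · have := (h.root_decomp α hα).resolve_left h1
    simp [h1, this]

theorem P_neg (h : C.IsRootDatum) {a : C.X × ℤ} (ha : a.1 ∈ C.roots) :
    C.P (-a) ↔ ¬ C.P a := by
  have h1 : (-a).1 ∈ C.roots := neg_root h ha
  have h2 : C.e (-a).1 = 1 - C.e a.1 := e_neg h ha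
  have h3 : (-a).2 = - a.2 := rfl
  simp only [P, ha, h1, true_and, h2, h3]
  constructor <;> intro <;> omega

theorem exists_f (h : C.IsRootDatum) : ∃ f : C.X × ℤ →+ ℤ, ∀ a : C.X × ℤ, a.1 ∈ C.roots →
    (C.P a ↔ 0 < f a) ∧ f a ≠ 0 := by
  obtain ⟨η, hη⟩ := h.exists_regular_Y
  let N : ℤ := 1 + ∑ α ∈ C.pos, C.pair η α
  have hN : ∀ α ∈ C.pos, C.pair η α < N := by
    intro α hα
    have := Finset.single_le_sum (f := fun α => C.pair η α) (fun i hi => (hη i hi).le) hα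
    simp only [N]
    linarith
  refine ⟨{ toFun := fun a => N * a.2 - C.pair η a.1, map_zero' := by simp, map_add' := ?_ }, ?_⟩
  · intro a b
    simp; ring
  intro a ha
  simp only [P, ha, true_and, AddMonoidHom.coe_mk, ZeroHom.coe_mk]
  by_cases hp : a.1 ∈ C.pos
  · have h1 := hη _ hp
    have h2 := hN _ hp
    simp only [e, hp, if_true]
    rcases le_or_gt 1 a.2 with h3 | h3
    · have : 0 < N * a.2 - C.pair η a.1 := by nlinarith
      exact ⟨⟨fun _ => this, fun _ => h3⟩, this.ne'⟩
    · have : N * a.2 - C.pair η a.1 < 0 := by nlinarith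
      exact ⟨⟨fun _ => by omega, fun _ => by omega⟩, this.ne⟩
  · have hn := (h.root_decomp _ ha).resolve_left hp
    have h1 := hη _ hn
    have h2 := hN _ hn
    rw [map_neg] at h1 h2
    simp only [e, hp, if_false]
    rcases le_or_gt 0 a.2 with h3 | h3
    · have : 0 < N * a.2 - C.pair η a.1 := by nlinarith
      exact ⟨⟨fun _ => this, fun _ => h3⟩, this.ne'⟩
    · have : N * a.2 - C.pair η a.1 < 0 := by nlinarith
      exact ⟨⟨fun _ => by omega, fun _ => by omega⟩, this.ne⟩

/-- The inversion set. -/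
def inv (C : Ctx) (g : C.Wext) : Finset (C.X × ℤ) :=
  (C.roots.sigma fun α => Finset.Ico (C.e α)
    (C.pair (Multiplicative.toAdd g.left) (g.right • α) + C.e (g.right • α))).map
    (Equiv.sigmaEquivProd C.X ℤ).toEmbedding

theorem mem_inv (h : C.IsRootDatum) (g : C.Wext) (a : C.X × ℤ) :
    a ∈ C.inv g ↔ C.P a ∧ ¬ C.P (C.act g a) := by
  obtain ⟨α, n⟩ := a
  have hr : α ∈ C.roots → g.right • α ∈ C.roots := h.roots_stable _ _
  simp only [inv, P, act_apply, Finset.mem_map_equiv]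
  simp only [Equiv.sigmaEquivProd, Equiv.coe_fn_symm_mk, Finset.mem_sigma, Finset.mem_Ico]
  constructor
  · rintro ⟨h1, h2, h3⟩
    exact ⟨⟨h1, h2⟩, fun h4 => by have := h4.2; omega⟩
  · rintro ⟨⟨h1, h2⟩, h3⟩
    refine ⟨h1, h2, ?_⟩
    by_contra h4
    exact h3 ⟨hr h1, by omega⟩

theorem sum_roots (h : C.IsRootDatum) {M : Type*} [AddCommMonoid M] (F : C.X → M) :
    ∑ α ∈ C.roots, F α = ∑ α ∈ C.pos, (F α + F (-α)) := by
  have hu : C.roots = C.pos ∪ C.pos.map (Equiv.neg C.X).toEmbedding := by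
    ext α
    simp only [Finset.mem_union, Finset.mem_map_equiv]
    constructor
    · intro ha
      simpa using h.root_decomp α ha
    · rintro (ha | ha)
      · exact h.pos_subset ha
      · have := neg_root h (h.pos_subset ha)
        simpa using this
  have hd : Disjoint C.pos (C.pos.map (Equiv.neg C.X).toEmbedding) := by
    rw [Finset.disjoint_left]
    intro α h1 h2
    rw [Finset.mem_map_equiv] at h2
    exact h.pos_neg_disjoint α h1 (by simpa using h2)
  rw [hu, Finset.sum_union hd, Finset.sum_map, Finset.sum_add_distrib]
  simp

theorem len_eq (h : C.IsRootDatum) (g : C.Wext) :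
    C.len g = ∑ α ∈ C.pos, (C.pair (Multiplicative.toAdd g.left) (g.right • α)
      + C.e (g.right • α) - 1).natAbs := by
  unfold len
  apply Finset.sum_congr rfl
  intro α hα
  have : C.pair (g.right⁻¹ • Multiplicative.toAdd g.left) α
      = C.pair (Multiplicative.toAdd g.left) (g.right • α) := by
    rw [← h.pair_inv g.right, smul_inv_smul]
  rw [this]
  unfold e
  split_ifs <;> omega

theorem len_card (h : C.IsRootDatum) (g : C.Wext) : C.len g = (C.inv g).card := by
  rw [len_eq h, inv, Finset.card_map, Finset.card_sigma, sum_roots h]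
  apply Finset.sum_congr rfl
  intro α hα
  have hr := h.pos_subset hα
  have h1 : C.e α = 1 := by simp [e, hα]
  rw [smul_neg, e_neg h hr, e_neg h (h.roots_stable g.right α hr), map_neg]
  simp only [Int.card_Ico, h1]
  omega

end Ctx
end SemiInf
namespace SemiInf
namespace Ctx
variable {C : Ctx}

theorem zcancel (h : C.IsRootDatum) {p : ℤ} (hp : p ≠ 0) {x y : C.X} (H : p • x = p • y) :
    x = y := by
  apply h.perfect_right.1
  ext z
  have := congrArg (C.pair z) H
  simp only [map_zsmul, smul_eq_mul] at this
  exact mul_left_cancel₀ hp this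

theorem prop_eq (h : C.IsRootDatum) {p q : ℤ} (hp : 0 < p) (hq : 0 < q) {β γ : C.X}
    (hβ : β ∈ C.roots) (hγ : γ ∈ C.roots) (H : p • γ = q • β) : γ = β ∧ p = q := by
  have h1 := congrArg (C.pair (C.coroot β)) H
  have h2 := congrArg (C.pair (C.coroot γ)) H
  simp only [map_zsmul, smul_eq_mul, h.coroot_self _ hβ, h.coroot_self _ hγ] at h1 h2
  generalize hA : C.pair (C.coroot β) γ = A at h1
  generalize hB : C.pair (C.coroot γ) β = B at h2
  have hAB : A * B = 4 := by
    have : p * (A * B) = p * 4 := by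
      rw [← mul_assoc, h1]; linarith
    exact mul_left_cancel₀ hp.ne' this
  have hA0 : 0 < A := by nlinarith
  have hB0 : 0 < B := by nlinarith
  have hA4 : A ≤ 4 := by nlinarith
  interval_cases A
  · exfalso
    have h3 : p = q * 2 := by linarith
    rw [h3, mul_smul] at H
    have h4 := zcancel h hq.ne' H
    have := h.reduced γ hγ 2 (by rw [h4]; exact hβ)
    omega
  · have h3 : p = q := by linarith
    rw [h3] at H
    exact ⟨zcancel h hq.ne' H, h3⟩
  · omega
  · exfalso
    have h3 : q = p * 2 := by linarith
    rw [h3, mul_smul] at H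
    have h4 := zcancel h hp.ne' H
    have := h.reduced β hβ 2 (by rw [← h4]; exact hγ)
    omega

theorem exists_sep1 (h : C.IsRootDatum) (v : C.X × ℤ) (hv : v ≠ 0) :
    ∃ k : C.X × ℤ →+ ℤ, k v ≠ 0 := by
  by_cases h2 : v.2 = 0
  · have h1 : v.1 ≠ 0 := fun h1 => hv (Prod.ext h1 h2)
    by_contra H
    push Not at H
    apply h1
    apply h.perfect_right.1
    ext y
    have := H ((C.pair y).comp (AddMonoidHom.fst _ _))
    simpa using this
  · exact ⟨AddMonoidHom.snd _ _, h2⟩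

theorem exists_sep (h : C.IsRootDatum) (F : Finset (C.X × ℤ)) (hF : ∀ v ∈ F, v ≠ 0) :
    ∃ k : C.X × ℤ →+ ℤ, ∀ v ∈ F, k v ≠ 0 := by
  induction F using Finset.induction_on with
  | empty => exact ⟨0, by simp⟩
  | insert v F _ ih =>
    obtain ⟨k, hk⟩ := ih fun u hu => hF u (Finset.mem_insert_of_mem hu)
    by_cases hkv : k v = 0
    · obtain ⟨j, hj⟩ := exists_sep1 h v (hF v (Finset.mem_insert_self _ _))
      refine ⟨(1 + ∑ u ∈ F, |j u|) • k + j, ?_⟩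
      intro u hu
      rcases Finset.mem_insert.1 hu with rfl | hu
      · simpa [hkv] using hj
      · have h1 := Finset.single_le_sum (f := fun u => |j u|) (fun i _ => abs_nonneg _) hu
        have h2 := hk u hu
        simp only [AddMonoidHom.add_apply, AddMonoidHom.smul_apply, smul_eq_mul]
        intro h3
        have h4 : |j u| = (1 + ∑ u ∈ F, |j u|) * |k u| := by
          have : j u = - ((1 + ∑ u ∈ F, |j u|) * k u) := by linarith
          have hpos : 0 ≤ 1 + ∑ u ∈ F, |j u| := by
            have := abs_nonneg (j u); linarith
          conv_lhs => rw [this]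
          rw [abs_neg, abs_mul, abs_of_nonneg hpos]
        have h5 : 1 ≤ |k u| := Int.one_le_abs h2
        have := abs_nonneg (j u)
        nlinarith
    · refine ⟨k, ?_⟩
      intro u hu
      rcases Finset.mem_insert.1 hu with rfl | hu
      · exact hkv
      · exact hk u hu

theorem exists_simple (h : C.IsRootDatum) (g : C.Wext) (hne : (C.inv g).Nonempty) :
    ∃ b, C.Simple b ∧ ¬ C.P (C.act g b) := by
  obtain ⟨f, hf⟩ := exists_f h
  have hinv : ∀ a ∈ C.inv g, a.1 ∈ C.roots ∧ 0 < f a ∧ f (C.act g a) < 0 := by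
    intro a ha
    rw [mem_inv h] at ha
    have h1 := hf a ha.1.1
    have h2 := hf _ (act_root h g ha.1.1)
    refine ⟨ha.1.1, h1.1.1 ha.1, ?_⟩
    have h3 := mt h2.1.2 ha.2
    have := h2.2
    omega
  obtain ⟨k, hk⟩ := exists_sep h
    (((C.inv g ×ˢ C.inv g).image fun q => f q.1 • q.2 - f q.2 • q.1).filter fun v => v ≠ 0)
    (by intro v hv; exact (Finset.mem_filter.1 hv).2)
  have hk' : ∀ b ∈ C.inv g, ∀ c ∈ C.inv g, f b * k c = f c * k b → f b • c = f c • b := by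
    intro b hb c hc hbc
    by_contra hne
    refine hk (f b • c - f c • b) ?_ ?_
    · rw [Finset.mem_filter]
      refine ⟨Finset.mem_image.2 ⟨(b, c), by simp [hb, hc], rfl⟩, ?_⟩
      exact sub_ne_zero.2 hne
    · simp [hbc]
  obtain ⟨b, hb, hmax⟩ := Finset.exists_max_image (C.inv g)
    (fun c => toLex ((-(f (C.act g c) : ℚ) / f c, (k c : ℚ) / f c) : ℚ × ℚ)) hne
  obtain ⟨hbr, hfb, hgb⟩ := hinv b hb
  have hbP := ((mem_inv h g b).1 hb)
  have hmax' : ∀ c ∈ C.inv g, (-f (C.act g c)) * f b ≤ (-f (C.act g b)) * f c ∧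
      ((-f (C.act g c)) * f b = (-f (C.act g b)) * f c → k c * f b ≤ k b * f c) := by
    intro c hc
    have h1 := hmax c hc
    obtain ⟨hcr, hfc, hgc⟩ := hinv c hc
    have hfb' : (0 : ℚ) < f b := by exact_mod_cast hfb
    have hfc' : (0 : ℚ) < f c := by exact_mod_cast hfc
    rw [Prod.Lex.toLex_le_toLex] at h1
    simp only at h1
    rw [div_lt_div_iff₀ hfc' hfb', div_eq_div_iff hfc'.ne' hfb'.ne',
      div_le_div_iff₀ hfc' hfb'] at h1
    rcases h1 with h1 | ⟨h1, h2⟩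
    · have h1' : (-f (C.act g c)) * f b < (-f (C.act g b)) * f c := by exact_mod_cast h1
      exact ⟨h1'.le, fun h => absurd h h1'.ne⟩
    · have h1' : (-f (C.act g c)) * f b = (-f (C.act g b)) * f c := by exact_mod_cast h1
      exact ⟨h1'.le, fun _ => by exact_mod_cast h2⟩
  refine ⟨b, ⟨hbP.1, ?_⟩, hbP.2⟩
  intro c hcP
  by_contra hcon
  push Not at hcon
  obtain ⟨hc1, hcb⟩ := hcon
  have hd1 : (C.act (C.refl b) c).1 ∈ C.roots := act_root h _ hcP.1
  rw [← P_neg h hd1] at hc1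
  rw [refl_act h hbr] at hc1
  generalize C.pair (C.coroot b.1) c.1 = m at hc1
  generalize hd : -(c - m • b) = d at hc1
  have hde : d = m • b - c := by rw [← hd]; abel
  have hfc : 0 < f c := ((hf c hcP.1).1.1 hcP)
  have hfd : 0 < f d := ((hf d hc1.1).1.1 hc1)
  have e1 : f d = m * f b - f c := by rw [hde]; simp
  have e2 : f (C.act g d) = m * f (C.act g b) - f (C.act g c) := by rw [hde]; simp
  have e3 : k d = m * k b - k c := by rw [hde]; simp
  have hm : 0 < m := by nlinarith
  have hnot : ∀ c, C.P c → c ∉ C.inv g → 0 < f (C.act g c) := by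
    intro c hc hc'
    rw [mem_inv h] at hc'
    push Not at hc'
    exact (hf _ (act_root h g hc.1)).1.1 (hc' hc)
  by_cases hci : c ∈ C.inv g
  · by_cases hdi : d ∈ C.inv g
    · obtain ⟨a1, a2⟩ := hmax' c hci
      obtain ⟨b1, b2⟩ := hmax' d hdi
      rw [e1, e2] at b1 b2
      rw [e3] at b2
      have a3 : (-f (C.act g c)) * f b = (-f (C.act g b)) * f c := by nlinarith
      have a4 := a2 a3
      have b4 := b2 (by linear_combination -a3)
      have a5 : f b * k c = f c * k b := by nlinarith
      have a6 := hk' b hb c hci a5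
      have a7 := prop_eq h hfb hfc hbr hcP.1 (congrArg Prod.fst a6)
      apply hcb
      have a8 := congrArg Prod.snd a6
      rw [← a7.2] at a8
      exact Prod.ext a7.1 (mul_left_cancel₀ hfb.ne' (by simpa using a8))
    · have h1 := hnot d hc1 hdi
      have h2 := (hmax' c hci).1
      nlinarith [mul_pos h1 hfb, mul_pos_of_neg_of_neg hgb (neg_neg_of_pos hfd)]
  · have h1 := hnot c hcP hci
    have hdi : d ∈ C.inv g := by
      by_contra hdi
      have h2 := hnot d hc1 hdi
      nlinarith
    have h2 := (hmax' d hdi).1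
    nlinarith [mul_pos h1 hfb, mul_pos_of_neg_of_neg hgb (neg_neg_of_pos hfc)]

theorem simple_root {b : C.X × ℤ} (hb : C.Simple b) : b.1 ∈ C.roots := hb.1.1

theorem P_refl_iff (h : C.IsRootDatum) {b : C.X × ℤ} (hb : C.Simple b) {c : C.X × ℤ}
    (hc : c.1 ∈ C.roots) (h1 : c ≠ b) (h2 : c ≠ -b) :
    C.P (C.act (C.refl b) c) ↔ C.P c := by
  by_cases hP : C.P c
  · simp [hP, (hb.2 c hP).resolve_right h1]
  · have h3 := (hb.2 (-c) ((P_neg h hc).2 hP)).resolve_right (fun h4 => h2 (by rw [← h4, neg_neg]))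
    rw [map_neg, P_neg h (act_root h _ hc)] at h3
    simp [hP, h3]

theorem len_refl_pos (h : C.IsRootDatum) {b : C.X × ℤ} (hb : C.Simple b) {g : C.Wext}
    (hg : C.P (C.act g⁻¹ b)) : C.len (C.refl b * g) = C.len g + 1 := by
  have hnot : C.act g⁻¹ b ∉ C.inv g := by
    rw [mem_inv h, act_act_inv h]
    exact fun H => H.2 hb.1
  have hnP : ¬ C.P (-b) := by rw [P_neg h hb.1.1]; simpa using hb.1
  rw [len_card h, len_card h, ← Finset.card_insert_of_notMem hnot]
  congr 1
  ext a
  rw [Finset.mem_insert, mem_inv h, mem_inv h, act_mul h]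
  by_cases h1 : C.act g a = b
  · have h2 : a = C.act g⁻¹ b := by rw [← h1, act_inv_act h]
    have h3 : C.P a := by rw [h2]; exact hg
    simp only [h2, true_or, iff_true]
    rw [act_act_inv h, refl_self h hb.1.1]
    exact ⟨hg, hnP⟩
  · have h2 : a ≠ C.act g⁻¹ b := by
      rintro rfl
      exact h1 (act_act_inv h _ _)
    simp only [h2, false_or]
    refine and_congr_right fun hPa => not_congr ?_
    by_cases h3 : C.act g a = -b
    · exfalso
      have h4 : a = - C.act g⁻¹ b := by rw [← map_neg, ← h3, act_inv_act h]
      rw [h4, P_neg h (act_root h _ hb.1.1)] at hPa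
      exact hPa hg
    · exact P_refl_iff h hb (act_root h _ hPa.1) h1 h3

theorem len_refl_neg (h : C.IsRootDatum) {b : C.X × ℤ} (hb : C.Simple b) {g : C.Wext}
    (hg : ¬ C.P (C.act g⁻¹ b)) : C.len g = C.len (C.refl b * g) + 1 := by
  have := len_refl_pos h hb (g := C.refl b * g) (by
    rw [mul_inv_rev, act_mul h, refl_inv h hb.1.1, refl_self h hb.1.1, map_neg,
      P_neg h (act_root h _ hb.1.1)]
    exact hg)
  rw [← this, ← mul_assoc, refl_refl h hb.1.1, one_mul]

theorem len_zero_P (h : C.IsRootDatum) {g : C.Wext} (hg : C.len g = 0) {a : C.X × ℤ}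
    (ha : a.1 ∈ C.roots) : C.P (C.act g a) ↔ C.P a := by
  rw [len_card h, Finset.card_eq_zero] at hg
  have key : ∀ c, C.P c → C.P (C.act g c) := by
    intro c hc
    by_contra h1
    have : c ∈ C.inv g := (mem_inv h g c).2 ⟨hc, h1⟩
    simp [hg] at this
  refine ⟨fun h1 => ?_, key a⟩
  by_contra h2
  have h3 := key (-a) ((P_neg h ha).2 h2)
  rw [map_neg, P_neg h (act_root h _ ha)] at h3
  exact h3 h1

theorem exists_left (h : C.IsRootDatum) {g : C.Wext} (hg : C.len g ≠ 0) :
    ∃ b, C.Simple b ∧ ¬ C.P (C.act g⁻¹ b) := by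
  apply exists_simple h
  rw [len_card h, Finset.card_ne_zero] at hg
  obtain ⟨a, ha⟩ := hg
  rw [mem_inv h] at ha
  refine ⟨-C.act g a, ?_⟩
  rw [mem_inv h, P_neg h (act_root h _ ha.1.1), map_neg, act_inv_act h, P_neg h ha.1.1]
  simpa using ha.symm

theorem len_zero_mul (h : C.IsRootDatum) {ω : C.Wext} (hω : C.len ω = 0) (g : C.Wext) :
    C.len (ω * g) = C.len g := by
  rw [len_card h, len_card h]
  congr 1
  ext a
  rw [mem_inv h, mem_inv h, act_mul h]
  refine and_congr_right fun ha => not_congr ?_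
  exact len_zero_P h hω (act_root h _ ha.1)

theorem len_one (h : C.IsRootDatum) : C.len (1 : C.Wext) = 0 := by
  rw [len_card h, Finset.card_eq_zero, Finset.eq_empty_iff_forall_notMem]
  intro a
  rw [mem_inv h, act_one]
  tauto

theorem len_refl_le (h : C.IsRootDatum) {b : C.X × ℤ} (hb : C.Simple b) (g : C.Wext) :
    C.len (C.refl b * g) ≤ C.len g + 1 := by
  by_cases hg : C.P (C.act g⁻¹ b)
  · exact (len_refl_pos h hb hg).le
  · have := len_refl_neg h hb hg
    omega

theorem len_mul_le (h : C.IsRootDatum) (n : ℕ) : ∀ g k : C.Wext, C.len g = n →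
    C.len (g * k) ≤ C.len g + C.len k := by
  induction n with
  | zero =>
    intro g k hg
    rw [len_zero_mul h hg]; omega
  | succ n ih =>
    intro g k hg
    obtain ⟨b, hb, hbg⟩ := exists_left h (g := g) (by omega)
    have h1 := len_refl_neg h hb hbg
    have h2 := ih (C.refl b * g) k (by omega)
    have h3 := len_refl_le h hb (C.refl b * g * k)
    rw [mul_assoc, ← mul_assoc, refl_refl h hb.1.1, one_mul] at h3
    rw [mul_assoc] at h2
    omega

/-- The set of simple affine reflections. -/
def S (C : Ctx) : Set C.Wext := {s | ∃ b, C.Simple b ∧ s = C.refl b}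

theorem exchange (h : C.IsRootDatum) (l : List C.Wext) (hl : ∀ s ∈ l, s ∈ C.S)
    {a : C.X × ℤ} (ha : C.P a) (hla : ¬ C.P (C.act l.prod a)) :
    ∃ l' : List C.Wext, l'.Sublist l ∧ l'.length + 1 = l.length ∧ l'.prod = l.prod * C.refl a := by
  induction l with
  | nil => exact absurd (by simpa [act_one] using ha) hla
  | cons s l ih =>
    obtain ⟨b, hb, rfl⟩ := hl s (by simp)
    by_cases h1 : C.P (C.act l.prod a)
    · rw [List.prod_cons, act_mul h] at hla
      have h2 := (hb.2 _ h1).resolve_left hla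
      refine ⟨l, List.sublist_cons_self _ _, by simp, ?_⟩
      rw [List.prod_cons, mul_assoc, ← mul_refl h _ ha.1, h2, ← mul_assoc,
        refl_refl h hb.1.1, one_mul]
    · obtain ⟨l', h2, h3, h4⟩ := ih (fun s hs => hl s (by simp [hs])) h1
      refine ⟨C.refl b :: l', h2.cons_cons _, by simp [h3], ?_⟩
      rw [List.prod_cons, List.prod_cons, h4, mul_assoc]

theorem decomp_left (h : C.IsRootDatum) (n : ℕ) : ∀ g : C.Wext, C.len g = n →
    ∃ l : List C.Wext, ∃ ω : C.Wext, (∀ s ∈ l, s ∈ C.S) ∧ l.length = n ∧ C.len ω = 0 ∧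
      g = l.prod * ω := by
  induction n with
  | zero => exact fun g hg => ⟨[], g, by simp, rfl, hg, by simp⟩
  | succ n ih =>
    intro g hg
    obtain ⟨b, hb, hbg⟩ := exists_left h (g := g) (by omega)
    have h1 := len_refl_neg h hb hbg
    obtain ⟨l, ω, h2, h3, h4, h5⟩ := ih (C.refl b * g) (by omega)
    refine ⟨C.refl b :: l, ω, ?_, by simp [h3], h4, ?_⟩
    · intro s hs
      rcases List.mem_cons.1 hs with rfl | hs
      · exact ⟨b, hb, rfl⟩
      · exact h2 s hs
    · rw [List.prod_cons, mul_assoc, ← h5, ← mul_assoc, refl_refl h hb.1.1, one_mul]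

theorem len_zero_inv (h : C.IsRootDatum) {ω : C.Wext} (hω : C.len ω = 0) : C.len ω⁻¹ = 0 := by
  have := len_zero_mul h hω ω⁻¹
  rw [mul_inv_cancel, len_one h] at this
  exact this.symm

theorem len_list_le (h : C.IsRootDatum) (l : List C.Wext) (hl : ∀ s ∈ l, s ∈ C.S) :
    C.len l.prod ≤ l.length := by
  induction l with
  | nil => simp [len_one h]
  | cons s l ih =>
    obtain ⟨b, hb, rfl⟩ := hl s (by simp)
    have h1 := ih (fun s hs => hl s (by simp [hs]))
    have h2 := len_refl_le h hb l.prod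
    rw [List.prod_cons, List.length_cons]
    omega

theorem list_inv (h : C.IsRootDatum) (l : List C.Wext) (hl : ∀ s ∈ l, s ∈ C.S) :
    l.prod⁻¹ = l.reverse.prod := by
  rw [List.prod_inv_reverse]
  congr 1
  congr 1
  conv_rhs => rw [← List.map_id l]
  apply List.map_congr_left
  intro s hs
  obtain ⟨b, hb, rfl⟩ := hl s hs
  exact refl_inv h hb.1.1

theorem decomp_right' (h : C.IsRootDatum) (g : C.Wext) :
    ∃ l : List C.Wext, ∃ ω : C.Wext, (∀ s ∈ l, s ∈ C.S) ∧ l.length = C.len g⁻¹ ∧ C.len ω = 0 ∧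
      g = ω * l.prod := by
  obtain ⟨l, ω, h1, h2, h3, h4⟩ := decomp_left h _ g⁻¹ rfl
  refine ⟨l.reverse, ω⁻¹, by simpa using h1, by simpa using h2, len_zero_inv h h3, ?_⟩
  rw [← list_inv h l h1, ← mul_inv_rev, ← h4, inv_inv]

theorem len_le_inv (h : C.IsRootDatum) (g : C.Wext) : C.len g ≤ C.len g⁻¹ := by
  obtain ⟨l, ω, h1, h2, h3, h4⟩ := decomp_right' h g
  have := len_list_le h l h1
  rw [← h2]
  conv_lhs => rw [h4]
  rwa [len_zero_mul h h3]

theorem decomp_right (h : C.IsRootDatum) (g : C.Wext) :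
    ∃ l : List C.Wext, ∃ ω : C.Wext, (∀ s ∈ l, s ∈ C.S) ∧ l.length = C.len g ∧ C.len ω = 0 ∧
      g = ω * l.prod := by
  have h1 := len_le_inv h g
  have h2 := len_le_inv h g⁻¹
  rw [inv_inv] at h2
  have h3 : C.len g⁻¹ = C.len g := le_antisymm h2 h1
  rw [← h3]
  exact decomp_right' h g

theorem S_len_zero (h : C.IsRootDatum) (n : ℕ) : ∀ l : List C.Wext, l.length = n →
    (∀ s ∈ l, s ∈ C.S) → C.len l.prod = 0 → l.prod = 1 := by
  induction n using Nat.strong_induction_on with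
  | _ n ih =>
    intro l hn hl h0
    cases l with
    | nil => rfl
    | cons s l =>
      obtain ⟨b, hb, rfl⟩ := hl s (by simp)
      rw [List.prod_cons] at h0 ⊢
      have h1 : ¬ C.P (C.act (l.prod)⁻¹ b) := by
        intro h1
        have := len_refl_pos h hb h1
        omega
      have hr := act_root h l.prod⁻¹ hb.1.1
      have h2 := (P_neg h hr).2 h1
      have hl' : ∀ s ∈ l, s ∈ C.S := fun s hs => hl s (by simp [hs])
      obtain ⟨l', h3, h4, h5⟩ := exchange h l hl' h2 (by
        rw [map_neg, act_act_inv h, P_neg h hb.1.1]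
        simpa using hb.1)
      rw [refl_neg h hr, ← mul_refl h _ hr, act_act_inv h] at h5
      rw [← h5]
      refine ih l'.length ?_ l' rfl (fun s hs => hl' s (h3.subset hs)) (by rw [h5]; exact h0)
      simp at hn
      omega

end Ctx
end SemiInf
namespace SemiInf
namespace Ctx
variable {C : Ctx}

theorem t_add (x y : C.Y) : C.t (x + y) = C.t x * C.t y := by
  simp [t, ofAdd_add]

theorem act_t (y : C.Y) (a : C.X × ℤ) : C.act (C.t y) a = (a.1, a.2 - C.pair y a.1) := by
  simp [act_apply, t]

theorem act_σ (w : C.W) (a : C.X × ℤ) : C.act (C.σ w) a = (w • a.1, a.2) := by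
  simp [act_apply, σ]

theorem refl_mem_S (h : C.IsRootDatum) {a : C.X × ℤ} (ha : a.1 ∈ C.roots) :
    C.refl a ∈ Subgroup.closure C.S := by
  wlog hP : C.P a generalizing a with H
  · rw [← refl_neg h ha]
    exact H (neg_root h ha) ((P_neg h ha).2 hP)
  obtain ⟨l, ω, h1, h2, h3, h4⟩ := decomp_right h (C.refl a)
  have h5 := refl_self h ha
  rw [h4, act_mul h] at h5
  have h6 : ¬ C.P (C.act l.prod a) := by
    rw [← len_zero_P h h3 (act_root h _ ha), h5, P_neg h ha]
    simpa using hP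
  obtain ⟨l', h7, h8, h9⟩ := exchange h l h1 hP h6
  have h10 : C.refl a = l.prod⁻¹ * l'.prod := by rw [h9]; group
  rw [h10]
  refine mul_mem (inv_mem ?_) ?_
  · exact list_prod_mem fun s hs => Subgroup.subset_closure (h1 s hs)
  · exact list_prod_mem fun s hs => Subgroup.subset_closure (h1 s (h7.subset hs))

theorem Waff_le (h : C.IsRootDatum) : C.Waff ≤ Subgroup.closure C.S := by
  unfold Waff
  rw [Subgroup.closure_le]
  rintro g (⟨y, hy, rfl⟩ | ⟨w, rfl⟩)
  · simp only [SetLike.mem_coe] at hy ⊢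
    induction hy using AddSubgroup.closure_induction with
    | mem y hy =>
      obtain ⟨β, hβ, rfl⟩ := hy
      have : C.t (C.coroot β) = C.refl (β, -1) * C.refl (β, 0) := by
        apply act_faithful h
        intro c
        rw [act_mul h, refl_act h (a := (β, -1)) hβ, refl_act h (a := (β, 0)) hβ, act_t]
        have h2 := h.coroot_self _ hβ
        ext
        · simp [h2]
          module
        · simp [h2]; ring
      rw [this]
      exact mul_mem (refl_mem_S h hβ) (refl_mem_S h hβ)
    | zero =>
      have : C.t 0 = 1 := by simp [t]
      rw [this]
      exact one_mem _
    | add x y _ _ hx hy =>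
      rw [t_add]
      exact mul_mem hx hy
    | neg x _ hx =>
      have : C.t (-x) = (C.t x)⁻¹ := by simp [t]
      rw [this]
      exact inv_mem hx
  · have hw := h.weyl_gen w
    simp only [SetLike.mem_coe]
    induction hw using Subgroup.closure_induction with
    | mem s hs =>
      obtain ⟨α, hα, hs, -⟩ := hs
      have : C.σ s = C.refl (α, 0) := by
        apply act_faithful h
        intro c
        rw [refl_act h (a := (α, 0)) hα, act_σ, hs]
        ext <;> simp
      rw [this]
      exact refl_mem_S h hα
    | one =>
      have : C.σ 1 = 1 := by simp [σ]
      rw [this]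
      exact one_mem _
    | mul x y _ _ hx hy =>
      have : C.σ (x * y) = C.σ x * C.σ y := by simp [σ]
      rw [this]
      exact mul_mem hx hy
    | inv x _ hx =>
      have : C.σ x⁻¹ = (C.σ x)⁻¹ := by simp [σ]
      rw [this]
      exact inv_mem hx

theorem Waff_zero (h : C.IsRootDatum) {g : C.Wext} (hg : g ∈ C.Waff) (h0 : C.len g = 0) :
    g = 1 := by
  have hg' := Waff_le h hg
  rw [← Subgroup.mem_toSubmonoid, Subgroup.closure_toSubmonoid] at hg'
  obtain ⟨l, hl, rfl⟩ := Submonoid.exists_list_of_mem_closure hg'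
  refine S_len_zero h _ l rfl ?_ h0
  intro s hs
  rcases hl s hs with h1 | ⟨b, hb, h1⟩
  · exact h1
  · refine ⟨b, hb, ?_⟩
    rw [← inv_inv s, h1, refl_inv h hb.1.1]

theorem S_eq (h : C.IsRootDatum) : C.S = C.Saff := by
  have hW : ∀ a : C.X × ℤ, a.1 ∈ C.roots → C.refl a ∈ C.Waff := by
    intro a ha
    unfold Waff refl
    refine mul_mem (Subgroup.subset_closure (Set.mem_union_left _ ?_))
      (Subgroup.subset_closure (Set.mem_union_right _ (Set.mem_range_self _)))
    refine Set.mem_image_of_mem (fun l => C.t l) ?_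
    exact neg_mem (zsmul_mem (AddSubgroup.subset_closure (Set.mem_image_of_mem _ ha)) _)
  ext s
  constructor
  · rintro ⟨b, hb, rfl⟩
    refine ⟨hW _ hb.1.1, ?_⟩
    have := len_refl_pos h hb (g := 1) (by simpa [act_one] using hb.1)
    simpa [len_one h] using this
  · rintro ⟨h1, h2⟩
    obtain ⟨b, hb, hbg⟩ := exists_left h (g := s) (by omega)
    have h3 := len_refl_neg h hb hbg
    have h4 := Waff_zero h (mul_mem (hW b hb.1.1) h1) (by omega)
    refine ⟨b, hb, ?_⟩
    rw [← refl_inv h hb.1.1]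
    exact (inv_eq_of_mul_eq_one_right h4).symm

/-- An edge of the Bruhat graph. -/
def Edge (C : Ctx) (x y : C.Wext) : Prop :=
  ∃ a, C.P a ∧ C.P (C.act x a) ∧ y = x * C.refl a

/-- The Bruhat order by chains. -/
def Chain (C : Ctx) : C.Wext → C.Wext → Prop := Relation.ReflTransGen C.Edge

theorem edge_zero (h : C.IsRootDatum) {ω : C.Wext} (hω : C.len ω = 0) {x y : C.Wext}
    (H : C.Edge x y) : C.Edge (ω * x) (ω * y) := by
  obtain ⟨a, h1, h2, rfl⟩ := H
  refine ⟨a, h1, ?_, by rw [mul_assoc]⟩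
  rw [act_mul h, len_zero_P h hω h2.1]
  exact h2

theorem chain_zero (h : C.IsRootDatum) {ω : C.Wext} (hω : C.len ω = 0) {x y : C.Wext}
    (H : C.Chain x y) : C.Chain (ω * x) (ω * y) :=
  Relation.ReflTransGen.lift (fun x => ω * x) (fun _ _ H => edge_zero h hω H) _ _ H

theorem chain_zero_iff (h : C.IsRootDatum) {ω : C.Wext} (hω : C.len ω = 0) {x y : C.Wext} :
    C.Chain (ω * x) (ω * y) ↔ C.Chain x y := by
  refine ⟨fun H => ?_, chain_zero h hω⟩
  simpa using chain_zero h (len_zero_inv h hω) H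

theorem edge_simple (h : C.IsRootDatum) {b : C.X × ℤ} (hb : C.Simple b) {x y : C.Wext}
    (H : C.Edge x y) : C.Edge (C.refl b * x) (C.refl b * y) ∨ C.refl b * x = y := by
  obtain ⟨a, h1, h2, rfl⟩ := H
  rcases hb.2 _ h2 with h3 | h3
  · left
    exact ⟨a, h1, by rwa [act_mul h], by rw [mul_assoc]⟩
  · right
    rw [← mul_refl h x h1.1, h3]

theorem edge_up (h : C.IsRootDatum) {b : C.X × ℤ} (hb : C.Simple b) {x : C.Wext}
    (hx : C.P (C.act x⁻¹ b)) : C.Edge x (C.refl b * x) := by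
  refine ⟨_, hx, by rw [act_act_inv h]; exact hb.1, ?_⟩
  rw [← mul_refl h _ (act_root h _ hb.1.1), act_act_inv h]

theorem chain_simple1 (h : C.IsRootDatum) {b : C.X × ℤ} (hb : C.Simple b) {x y : C.Wext}
    (H : C.Chain x y) :
    C.Chain (C.refl b * x) y ∨ C.Chain (C.refl b * x) (C.refl b * y) := by
  induction H with
  | refl => exact Or.inr Relation.ReflTransGen.refl
  | tail _ hyz ih =>
    rcases ih with ih | ih
    · exact Or.inl (ih.tail hyz)
    · rcases edge_simple h hb hyz with h1 | h1
      · exact Or.inr (ih.tail h1)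
      · left
        rwa [← h1]

theorem chain_simple2 (h : C.IsRootDatum) {b : C.X × ℤ} (hb : C.Simple b) {x y : C.Wext}
    (H : C.Chain x y) :
    C.Chain x (C.refl b * y) ∨ C.Chain (C.refl b * x) (C.refl b * y) := by
  induction H using Relation.ReflTransGen.head_induction_on with
  | refl => exact Or.inr Relation.ReflTransGen.refl
  | head hxz _ ih =>
    rcases ih with ih | ih
    · exact Or.inl (ih.head hxz)
    · rcases edge_simple h hb hxz with h1 | h1
      · exact Or.inr (ih.head h1)
      · left
        rw [← h1, ← mul_assoc, refl_refl h hb.1.1, one_mul] at ih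
        exact ih

theorem chain_simple_iff (h : C.IsRootDatum) {b : C.X × ℤ} (hb : C.Simple b) {x y : C.Wext}
    (hx : C.P (C.act x⁻¹ b)) (hy : C.P (C.act y⁻¹ b)) :
    C.Chain (C.refl b * x) (C.refl b * y) ↔ C.Chain x y := by
  constructor
  · intro H
    rcases chain_simple2 h hb H with h1 | h1
    · rw [← mul_assoc, refl_refl h hb.1.1, one_mul] at h1
      exact h1.head (edge_up h hb hx)
    · rwa [← mul_assoc, ← mul_assoc, refl_refl h hb.1.1, one_mul, one_mul] at h1
  · intro H
    rcases chain_simple1 h hb H with h1 | h1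
    · exact h1.tail (edge_up h hb hy)
    · exact h1

theorem chain_mul_iff (h : C.IsRootDatum) (n : ℕ) : ∀ z x y : C.Wext, C.len z = n →
    C.len (z * x) = C.len z + C.len x → C.len (z * y) = C.len z + C.len y →
    (C.Chain (z * x) (z * y) ↔ C.Chain x y) := by
  induction n with
  | zero =>
    intro z x y hz _ _
    exact chain_zero_iff h hz
  | succ n ih =>
    intro z x y hz hx hy
    obtain ⟨b, hb, hbg⟩ := exists_left h (g := z) (by omega)
    have h1 := len_refl_neg h hb hbg
    have key : ∀ x, C.len (z * x) = C.len z + C.len x →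
        C.len (C.refl b * z * x) = C.len (C.refl b * z) + C.len x ∧
        C.P (C.act (C.refl b * z * x)⁻¹ b) := by
      intro x hx
      have h2 := len_mul_le h _ (C.refl b * z) x rfl
      have h3 := len_refl_le h hb (C.refl b * z * x)
      have h4 : C.refl b * (C.refl b * z * x) = z * x := by
        rw [mul_assoc, ← mul_assoc, refl_refl h hb.1.1, one_mul]
      rw [h4] at h3
      refine ⟨by omega, ?_⟩
      by_contra h5
      have h6 := len_refl_neg h hb h5
      rw [h4] at h6
      omega
    obtain ⟨x1, x2⟩ := key x hx
    obtain ⟨y1, y2⟩ := key y hy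
    rw [← ih (C.refl b * z) x y (by omega) x1 y1, ← chain_simple_iff h hb x2 y2,
      ← mul_assoc, ← mul_assoc, ← mul_assoc, ← mul_assoc, refl_refl h hb.1.1, one_mul]

theorem chain_of_sublist (h : C.IsRootDatum) (l : List C.Wext) (hl : ∀ s ∈ l, s ∈ C.S)
    (hr : l.length = C.len l.prod) (l' : List C.Wext) (hl' : l'.Sublist l) :
    C.Chain l'.prod l.prod := by
  induction l generalizing l' with
  | nil =>
    rw [List.sublist_nil.1 hl']
    exact Relation.ReflTransGen.refl
  | cons s l ih =>
    obtain ⟨b, hb, rfl⟩ := hl s (by simp)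
    have hl1 : ∀ s ∈ l, s ∈ C.S := fun s hs => hl s (by simp [hs])
    have h1 := len_list_le h l hl1
    have h2 := len_refl_le h hb l.prod
    rw [List.prod_cons, List.length_cons] at hr
    rw [List.prod_cons]
    have hP : C.P (C.act l.prod⁻¹ b) := by
      by_contra h3
      have := len_refl_neg h hb h3
      omega
    have hup := edge_up h hb hP
    have ih' := ih hl1 (by omega)
    rcases List.sublist_cons_iff.1 hl' with h3 | ⟨r, rfl, h3⟩
    · exact (ih' l' h3).tail hup
    · rw [List.prod_cons]
      rcases chain_simple1 h hb (ih' r h3) with h4 | h4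
      · exact h4.tail hup
      · exact h4

theorem sublist_of_chain (h : C.IsRootDatum) (l : List C.Wext) (hl : ∀ s ∈ l, s ∈ C.S)
    {x y : C.Wext} (H : C.Chain x y) (hy : l.prod = y) :
    ∃ l' : List C.Wext, l'.Sublist l ∧ l'.prod = x := by
  induction H using Relation.ReflTransGen.head_induction_on with
  | refl => exact ⟨l, List.Sublist.refl _, hy⟩
  | head hxz _ ih =>
    obtain ⟨l1, h1, h2⟩ := ih
    obtain ⟨a, h3, h4, rfl⟩ := hxz
    obtain ⟨l2, h5, -, h6⟩ := exchange h l1 (fun s hs => hl s (h1.subset hs)) h3 (by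
      rw [h2, act_mul h, refl_self h h3.1, map_neg, P_neg h h4.1]
      simpa using h4)
    refine ⟨l2, h5.trans h1, ?_⟩
    rw [h6, h2, mul_assoc, refl_refl h h3.1, mul_one]

theorem bruhat_iff (h : C.IsRootDatum) (x y : C.Wext) : C.bruhat x y ↔ C.Chain x y := by
  constructor
  · rintro ⟨ω, u, v, hω, -, -, rfl, rfl, l, hl, rfl, hlen, l', hl', rfl⟩
    rw [← S_eq h] at hl
    exact chain_zero h hω (chain_of_sublist h l hl hlen l' hl')
  · intro H
    obtain ⟨l, ω, h1, h2, h3, h4⟩ := decomp_right h y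
    have hx : x = ω * (ω⁻¹ * x) := by group
    rw [hx, h4, chain_zero_iff h h3] at H
    obtain ⟨l', h5, h6⟩ := sublist_of_chain h l h1 H rfl
    have hW : ∀ s ∈ l, s ∈ C.Waff := by
      intro s hs
      have := h1 s hs
      rw [S_eq h] at this
      exact this.1
    refine ⟨ω, ω⁻¹ * x, l.prod, h3, ?_, list_prod_mem hW, hx, h4, l, ?_, rfl, ?_, l', h5, h6⟩
    · rw [← h6]
      exact list_prod_mem fun s hs => hW s (h5.subset hs)
    · rw [← S_eq h]; exact h1
    · rw [h2]
      conv_lhs => rw [h4]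
      exact len_zero_mul h h3 _

theorem sum_pos_perm (h : C.IsRootDatum) (w : C.W) (F : C.X → ℕ) (hF : ∀ x, F (-x) = F x) :
    ∑ α ∈ C.pos, F (w • α) = ∑ α ∈ C.pos, F α := by
  have h1 := sum_roots h F
  have h2 := sum_roots h (fun α => F (w • α))
  simp only [smul_neg, hF] at h1 h2
  have h3 : ∑ α ∈ C.roots, F (w • α) = ∑ α ∈ C.roots, F α := by
    refine Finset.sum_nbij' (fun α => w • α) (fun α => w⁻¹ • α) ?_ ?_ ?_ ?_ ?_
    · exact fun α hα => h.roots_stable _ _ hα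
    · exact fun α hα => h.roots_stable _ _ hα
    · intro α _; simp
    · intro α _; simp
    · intro α _; rfl
  rw [Finset.sum_add_distrib] at h1 h2
  omega

theorem mem_plus (h : C.IsRootDatum) {g : C.Wext}
    (hg : Multiplicative.toAdd g.left ∈ C.Ypos) : g ∈ C.WextPlus := by
  intro μ hμ
  have ht : C.len (C.t μ) = ∑ α ∈ C.pos, (C.pair μ α).natAbs := by
    rw [len_eq h]
    apply Finset.sum_congr rfl
    intro α hα
    simp [t, e, hα]
  rw [ht, ← sum_pos_perm h g.right (fun α => (C.pair μ α).natAbs) (by simp), len_eq h, len_eq h,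
    ← Finset.sum_add_distrib]
  apply Finset.sum_congr rfl
  intro α hα
  have hr := h.roots_stable g.right α (h.pos_subset hα)
  have h1 : (C.t μ * g).right = g.right := by simp [t]
  have h2 : Multiplicative.toAdd (C.t μ * g).left = μ + Multiplicative.toAdd g.left := by
    simp [t]
  rw [h1, h2, map_add, AddMonoidHom.add_apply]
  by_cases hp : g.right • α ∈ C.pos
  · have a1 := hμ _ hp
    have a2 := hg _ hp
    simp only [e, hp, if_true]
    omega
  · have hn := (h.root_decomp _ hr).resolve_left hp
    have a1 := hμ _ hn
    have a2 := hg _ hn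
    rw [map_neg] at a1 a2
    simp only [e, hp, if_false]
    omega

theorem exists_dom (h : C.IsRootDatum) (a b : C.Y) : ∃ ν, ν + a ∈ C.Ypos ∧ ν + b ∈ C.Ypos := by
  obtain ⟨η, hη⟩ := h.exists_regular_Y
  refine ⟨(∑ α ∈ C.pos, (|C.pair a α| + |C.pair b α|)) • η, ?_, ?_⟩ <;>
  · intro α hα
    have h1 := hη α hα
    have h2 := Finset.single_le_sum (f := fun α => |C.pair a α| + |C.pair b α|)
      (fun i _ => by positivity) hα
    simp only [map_add, map_zsmul, AddMonoidHom.add_apply, AddMonoidHom.smul_apply, smul_eq_mul]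
    have h3 := neg_abs_le (C.pair a α)
    have h4 := neg_abs_le (C.pair b α)
    have h5 := abs_nonneg (C.pair a α)
    have h6 := abs_nonneg (C.pair b α)
    nlinarith

theorem chain_t (h : C.IsRootDatum) {μ ν : C.Y} {w y : C.Wext} (hw : C.t μ * w ∈ C.WextPlus)
    (hy : C.t μ * y ∈ C.WextPlus) (hd : ν - μ ∈ C.Ypos) :
    C.Chain (C.t ν * w) (C.t ν * y) ↔ C.Chain (C.t μ * w) (C.t μ * y) := by
  have h1 : C.t ν = C.t (ν - μ) * C.t μ := by rw [← t_add]; simp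
  rw [h1, mul_assoc, mul_assoc]
  exact chain_mul_iff h _ _ _ _ rfl (hw _ hd) (hy _ hd)

end Ctx
end SemiInf

/-- For `w, y ∈ W_ext`: there exists `μ` with `t_μ w, t_μ y ∈ W_ext⁺` and
`t_μ w ≤ t_μ y` iff for all such `μ` one has `t_μ w ≤ t_μ y`. -/
theorem statement8 (C : SemiInf.Ctx) (h : C.IsRootDatum) (w y : C.Wext) :
    (∃ μ : C.Y, C.t μ * w ∈ C.WextPlus ∧ C.t μ * y ∈ C.WextPlus ∧
      C.bruhat (C.t μ * w) (C.t μ * y)) ↔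
    (∀ μ : C.Y, C.t μ * w ∈ C.WextPlus → C.t μ * y ∈ C.WextPlus →
      C.bruhat (C.t μ * w) (C.t μ * y)) := by
  simp only [SemiInf.Ctx.bruhat_iff h]
  constructor
  · rintro ⟨μ₀, hw₀, hy₀, H⟩ μ hw hy
    obtain ⟨ν, h1, h2⟩ := SemiInf.Ctx.exists_dom h (-μ₀) (-μ)
    rw [← sub_eq_add_neg] at h1 h2
    rw [← SemiInf.Ctx.chain_t h hw hy h2, SemiInf.Ctx.chain_t h hw₀ hy₀ h1]
    exact H
  · intro H
    obtain ⟨ν, h1, h2⟩ := SemiInf.Ctx.exists_dom h (Multiplicative.toAdd w.left)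
      (Multiplicative.toAdd y.left)
    have hw : C.t ν * w ∈ C.WextPlus := by
      apply SemiInf.Ctx.mem_plus h
      simpa [SemiInf.Ctx.t] using h1
    have hy : C.t ν * y ∈ C.WextPlus := by
      apply SemiInf.Ctx.mem_plus h
      simpa [SemiInf.Ctx.t] using h2
    exact ⟨ν, hw, hy, H ν hw hy⟩
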